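/- Let N be a matching in G that admits a 2-level witness. Then for every matching T in G with |T| > |N| we have Δ(N,T) > 0, i.e., N is more popular than T; in particular no matching larger than N is weakly popular, so N is a maximum-size weakly popular matching in G. -/

import Mathlib

/-!
Many-to-many matchings with two-sided preferences, votes, and popularity,
following "Popular Matchings in the Many-to-Many Setting".
-/

/-- The vote of a vertex with rank function `r` (smaller rank = more preferred)
comparing two options, where `none` stands for `null` (ranked below everything). -/
def vote {β : Type*} [DecidableEq β] (r : β → ℕ) : Option β → Option β → ℤ
  | none, none => 0
  | some _, none => 1
  | none, some _ => -1
  | some x, some y => if x = y then 0 else if r x < r y then 1 else -1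

/-- The common length `k` of the arrays compared in `δ_u(S₀,S₁)`:
after padding the smaller of `S₀, S₁` with nulls and removing common elements. -/
def kOf {β : Type*} [DecidableEq β] (S₀ S₁ : Finset β) : ℕ :=
  max S₀.card S₁.card - (S₀ ∩ S₁).card

/-- `S₀ ∖ S₁`, viewed as an array of `Option`s padded with `none` (null) to length `k`. -/
noncomputable def padded {β : Type*} [DecidableEq β] (S₀ S₁ : Finset β) (k : ℕ) : List (Option β) :=
  ((S₀ \ S₁).toList.map some) ++ List.replicate (k - (S₀ \ S₁).card) none

/-- `δ_u(S₀,S₁)`: the minimum, over all permutations `σ` of `{1,…,k}`, of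
`Σ_i vote_u(S'₀[i], S'₁[σ(i)])`. -/
noncomputable def deltaSet {β : Type*} [DecidableEq β] (r : β → ℕ) (S₀ S₁ : Finset β) : ℤ :=
  Finset.univ.inf' ⟨1, Finset.mem_univ 1⟩ fun σ : Equiv.Perm (Fin (kOf S₀ S₁)) =>
    ∑ i : Fin (kOf S₀ S₁),
      vote r ((padded S₀ S₁ (kOf S₀ S₁)).getD (i : ℕ) none)
             ((padded S₁ S₀ (kOf S₀ S₁)).getD (σ i : ℕ) none)

/-- A bipartite instance `G = (A ∪ B, E)` with capacities `≥ 1` and strict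
preferences of every vertex over its neighbors (given by injective-on-neighbors
rank functions; smaller rank = more preferred). -/
structure PrefInstance (α β : Type*) [Fintype α] [Fintype β] [DecidableEq α] [DecidableEq β] where
  E : Finset (α × β)
  capA : α → ℕ
  capB : β → ℕ
  rankA : α → β → ℕ
  rankB : β → α → ℕ
  capA_pos : ∀ a, 1 ≤ capA a
  capB_pos : ∀ b, 1 ≤ capB b
  rankA_injOn : ∀ a, Set.InjOn (rankA a) {b | (a, b) ∈ E}
  rankB_injOn : ∀ b, Set.InjOn (rankB b) {a | (a, b) ∈ E}

namespace PrefInstance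

variable {α β : Type*} [Fintype α] [Fintype β] [DecidableEq α] [DecidableEq β]

/-- `M(a)`: the set of `B`-vertices matched to `a` in `M`. -/
def rowSet (M : Finset (α × β)) (a : α) : Finset β :=
  Finset.univ.filter fun b => (a, b) ∈ M

/-- `M(b)`: the set of `A`-vertices matched to `b` in `M`. -/
def colSet (M : Finset (α × β)) (b : β) : Finset α :=
  Finset.univ.filter fun a => (a, b) ∈ M

variable (I : PrefInstance α β)

/-- `M` is a matching in `G`: a subset of `E` respecting all capacities. -/
def IsMatching (M : Finset (α × β)) : Prop :=
  M ⊆ I.E ∧ (∀ a, (rowSet M a).card ≤ I.capA a) ∧ (∀ b, (colSet M b).card ≤ I.capB b)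

/-- `Δ_a(M₀,M₁) = δ_a(M₀(a), M₁(a))` for `a ∈ A`. -/
noncomputable def DeltaA (M₀ M₁ : Finset (α × β)) (a : α) : ℤ :=
  deltaSet (I.rankA a) (rowSet M₀ a) (rowSet M₁ a)

/-- `Δ_b(M₀,M₁) = δ_b(M₀(b), M₁(b))` for `b ∈ B`. -/
noncomputable def DeltaB (M₀ M₁ : Finset (α × β)) (b : β) : ℤ :=
  deltaSet (I.rankB b) (colSet M₀ b) (colSet M₁ b)

/-- `Δ(M₀,M₁) = Σ_{u ∈ A∪B} Δ_u(M₀,M₁)`. -/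
noncomputable def Delta (M₀ M₁ : Finset (α × β)) : ℤ :=
  (∑ a, I.DeltaA M₀ M₁ a) + ∑ b, I.DeltaB M₀ M₁ b

/-- `M` is a popular matching: `Δ(M,T) ≥ 0` against every matching `T`. -/
def Popular (M : Finset (α × β)) : Prop :=
  I.IsMatching M ∧ ∀ T, I.IsMatching T → 0 ≤ I.Delta M T

/-- `M` is a weakly popular matching: `Δ(T,M) ≤ 0` for every matching `T`. -/
def WeaklyPopular (M : Finset (α × β)) : Prop :=
  I.IsMatching M ∧ ∀ T, I.IsMatching T → I.Delta T M ≤ 0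

/-- The edge `(a,b) ∈ E ∖ M` blocks `M`. -/
def Blocks (M : Finset (α × β)) (a : α) (b : β) : Prop :=
  (a, b) ∈ I.E ∧ (a, b) ∉ M ∧
  ((rowSet M a).card < I.capA a ∨ ∃ b' ∈ rowSet M a, I.rankA a b < I.rankA a b') ∧
  ((colSet M b).card < I.capB b ∨ ∃ a' ∈ colSet M b, I.rankB b a < I.rankB b a')

/-- `M` is a pairwise-stable matching: no edge blocks it. -/
def Stable (M : Finset (α × β)) : Prop :=
  I.IsMatching M ∧ ∀ a b, ¬ I.Blocks M a b

end PrefInstance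
namespace PrefInstance

variable {α β : Type*} [Fintype α] [Fintype β] [DecidableEq α] [DecidableEq β]
variable (I : PrefInstance α β)

/-- `A'`: the set of clones `a_i`, `1 ≤ i ≤ cap(a)`, of the vertices of `A`. -/
abbrev CloneA := (a : α) × Fin (I.capA a)

/-- `B'`: the set of clones `b_j`, `1 ≤ j ≤ cap(b)`, of the vertices of `B`. -/
abbrev CloneB := (b : β) × Fin (I.capB b)

/-- `N'` is a realization of the matching `N` on the cloned vertex sets: a
(one-to-one) matching on `A' × B'` whose projection is a bijection onto `N`. -/
def IsRealization (N : Finset (α × β)) (N' : Finset (I.CloneA × I.CloneB)) : Prop :=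
  (∀ e ∈ N', ∀ f ∈ N', e.1 = f.1 → e = f) ∧
  (∀ e ∈ N', ∀ f ∈ N', e.2 = f.2 → e = f) ∧
  N'.image (fun e => (e.1.1, e.2.1)) = N ∧
  N'.card = N.card

/-- The partner of `x ∈ A'` in a one-to-one matching `N'` on clones (`none` if unmatched,
i.e. matched to the last resort `ℓ(x)` in `N*`). -/
noncomputable def partnerA (N' : Finset (I.CloneA × I.CloneB)) (x : I.CloneA) :
    Option I.CloneB :=
  if h : ∃ y, (x, y) ∈ N' then some h.choose else none

/-- The partner of `y ∈ B'` in a one-to-one matching `N'` on clones (`none` if unmatched). -/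
noncomputable def partnerB (N' : Finset (I.CloneA × I.CloneB)) (y : I.CloneB) :
    Option I.CloneA :=
  if h : ∃ x, (x, y) ∈ N' then some h.choose else none

/-- `(x, y) ∈ A' × B'` is an edge of the graph `G'_N`: either the underlying pair is an
edge of `E ∖ N` (all clone copies present), or `(x,y)` is the unique copy in `N'` of an
edge of `N`. -/
def GNEdge (N : Finset (α × β)) (N' : Finset (I.CloneA × I.CloneB))
    (x : I.CloneA) (y : I.CloneB) : Prop :=
  ((x.1, y.1) ∈ I.E ∧ (x.1, y.1) ∉ N) ∨ (x, y) ∈ N'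

/-- The weight `wt_N(x,y) = vote_a(b, N*(a_i)) + vote_b(a, N*(b_j))` of an edge of `G'_N`
lying in `A' × B'` (a last-resort partner in `N*` is read as null). -/
noncomputable def wtE (N' : Finset (I.CloneA × I.CloneB))
    (x : I.CloneA) (y : I.CloneB) : ℤ :=
  vote (I.rankA x.1) (some y.1) (Option.map Sigma.fst (I.partnerA N' x)) +
  vote (I.rankB y.1) (some x.1) (Option.map Sigma.fst (I.partnerB N' y))

/-- A one-to-one matching on the clone sets (each clone is in at most one edge).
Together with the implicit last-resort edges for unmatched clones, this represents
an `(A' ∪ B')`-complete matching in `G'_N`. -/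
def IsCloneMatching (T' : Finset (I.CloneA × I.CloneB)) : Prop :=
  (∀ e ∈ T', ∀ f ∈ T', e.1 = f.1 → e = f) ∧ (∀ e ∈ T', ∀ f ∈ T', e.2 = f.2 → e = f)

/-- The weight `wt_N` of the `(A' ∪ B')`-complete matching represented by `T'`:
the sum of the weights of its `A' × B'` edges plus, for every clone left unmatched
in `T'` (hence matched to its last resort), the weight `wt_N(v, ℓ(v))`, which is
`-1` if `v` is matched in `N'` and `0` otherwise. -/
noncomputable def wtTotal (N' T' : Finset (I.CloneA × I.CloneB)) : ℤ :=
  (∑ e ∈ T', I.wtE N' e.1 e.2) +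
  (∑ x : I.CloneA,
    if ∀ y, (x, y) ∉ T' then (if ∃ y, (x, y) ∈ N' then (-1 : ℤ) else 0) else 0) +
  (∑ y : I.CloneB,
    if ∀ x, (x, y) ∉ T' then (if ∃ x, (x, y) ∈ N' then (-1 : ℤ) else 0) else 0)

/-- A 2-level witness for `N` (with realization `N'`): partitions
`A' = A'₀ ∪ A'₁` and `B' = B'₀ ∪ B'₁` (encoded by level functions `lA, lB`, where
`true` means level 1) such that clones of `A'` unmatched in `N'` are in `A'₁`, clones
of `B'` unmatched in `N'` are in `B'₀`, `N' ⊆ (A'₀ × B'₀) ∪ (A'₁ × B'₁)`, every edge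
of `G'_N` in `A'₁ × B'₀` has weight `-2`, and every edge of `G'_N` in
`(A'₀ × B'₀) ∪ (A'₁ × B'₁)` has weight `≤ 0`. -/
def TwoLevelWitness (N : Finset (α × β)) (N' : Finset (I.CloneA × I.CloneB))
    (lA : I.CloneA → Bool) (lB : I.CloneB → Bool) : Prop :=
  (∀ x : I.CloneA, (∀ y, (x, y) ∉ N') → lA x = true) ∧
  (∀ y : I.CloneB, (∀ x, (x, y) ∉ N') → lB y = false) ∧
  (∀ e ∈ N', lA e.1 = lB e.2) ∧
  (∀ x y, I.GNEdge N N' x y → lA x = true → lB y = false → I.wtE N' x y = -2) ∧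
  (∀ x y, I.GNEdge N N' x y → lA x = lB y → I.wtE N' x y ≤ 0)

end PrefInstance

/-!
The argument is linear programming duality for one-to-one matchings in `G'_N`.

Given `T`, an optimal permutation in each `δ_u(N(u), T(u))` tells which clone of `u` gets which
vertex of `T(u)`; the edges of `N ∩ T` keep their copy in `N'`. As the permutations for `a` and `b`
choose a copy of `a` and a copy of `b` for every `(a, b) ∈ T`, they realize `T` by a one-to-one
matching `T'` of `G'_N`, and the votes of the clones add up to `wt_N(T') = -Δ(N, T)`.

A witness is a dual solution: give the clones unmatched in `N'` the value `0`, the others in `A'₀`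
and `B'₁` the value `1`, and those in `A'₁` and `B'₀` the value `-1`. The values of two partners in
`N'` cancel, so the total is `0`. The conditions on the witness say that the values cover every edge
and every last resort, with slack `1` on each edge at a clone of `A'` that is unmatched in `N'`.
Hence `Δ(N, T)` is at least the number of edges of `T'` at such clones, and that number is at least
`|T| - |N|` because `N'` matches only `|N|` clones of `A'`.

The statements on weak popularity follow since `Δ(T, N) ≤ -Δ(N, T)`.
-/

/-! ### Votes -/

section Vote

variable {β : Type*} [DecidableEq β] (r : β → ℕ) (x y : Option β)

theorem vote_self : vote r x x = 0 := by
  cases x <;> simp [vote]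

theorem vote_none_left : vote r none y = if y = none then 0 else -1 := by
  cases y <;> rfl

theorem abs_vote_le_one : |vote r x y| ≤ 1 := by
  rcases x with _ | x <;> rcases y with _ | y <;> simp only [vote] <;> (try split_ifs) <;> norm_num

variable {r x y}

theorem vote_antisymm (hr : ∀ b ∈ x, ∀ c ∈ y, r b = r c → b = c) :
    vote r x y = -vote r y x := by
  rcases x with _ | b <;> rcases y with _ | c
  · rfl
  · rfl
  · rfl
  · have hbc := hr b rfl c rfl
    simp only [vote]
    split_ifs <;> grind

end Vote

/-! ### Enumerations with nulls -/

/-- `p` lists the set `S`, each element exactly once, with nulls in the remaining places. Both the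
padded arrays in `δ_u` and the partners of the clones of a vertex are such lists. -/
structure EnumeratesOnce {ι β : Type*} (p : ι → Option β) (S : Finset β) : Prop where
  unique : ∀ {i j b}, p i = some b → p j = some b → i = j
  exists_iff_mem : ∀ {b}, (∃ i, p i = some b) ↔ b ∈ S

/-- The elements of `S` as an array of length `k`, padded with nulls if `S` has fewer than `k`
elements: `S'₀` and `S'₁` in the definition of `δ_u(S₀, S₁)` are the arrays of `S₀ ∖ S₁` and
`S₁ ∖ S₀`. -/
noncomputable def paddedArray {β : Type*} (S : Finset β) (k : ℕ) (i : Fin k) : Option β :=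
  S.toList[(i : ℕ)]?

theorem enumeratesOnce_paddedArray {β : Type*} {S : Finset β} {k : ℕ} (hk : S.card ≤ k) :
    EnumeratesOnce (paddedArray S k) S where
  unique {i j b} hi hj := by
    obtain ⟨hlt, -⟩ := List.getElem?_eq_some_iff.1 hi
    exact Fin.ext ((List.getElem?_inj hlt S.nodup_toList).1 (hi.trans hj.symm))
  exists_iff_mem {b} := by
    rw [← Finset.mem_toList, List.mem_iff_getElem?]
    refine ⟨fun ⟨i, hi⟩ => ⟨i, hi⟩, fun ⟨n, hn⟩ => ?_⟩
    obtain ⟨hlt, -⟩ := List.getElem?_eq_some_iff.1 hn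
    exact ⟨⟨n, (hlt.trans_eq S.length_toList).trans_le hk⟩, hn⟩

theorem exists_injective_comp_eq_of_card_fiber_le {ι κ γ : Type*} [Fintype ι] [Fintype κ]
    [DecidableEq γ] {q : ι → γ} {p : κ → γ}
    (h : ∀ v, Fintype.card {i // q i = v} ≤ Fintype.card {c // p c = v}) :
    ∃ f : ι → κ, Function.Injective f ∧ p ∘ f = q := by
  let e := fun v => (Function.Embedding.nonempty_of_card_le (h v)).some
  let f : ι ↪ κ := (Equiv.sigmaFiberEquiv q).symm.toEmbedding.trans
    ((Function.Embedding.sigmaMap (.refl _) e).trans (Equiv.sigmaFiberEquiv p).toEmbedding)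
  exact ⟨f, f.injective, funext fun i => (e (q i) ⟨i, rfl⟩).2⟩

namespace EnumeratesOnce

variable {ι κ β : Type*} {p : κ → Option β} {q : ι → Option β} {f : ι → κ} {Q R S : Finset β}

theorem mem (hp : EnumeratesOnce p S) {c : κ} {b : β} (h : p c = some b) : b ∈ S :=
  hp.exists_iff_mem.1 ⟨c, h⟩

theorem comp_equiv (hq : EnumeratesOnce q S) (e : κ ≃ ι) : EnumeratesOnce (q ∘ e) S where
  unique hi hj := e.injective (hq.unique hi hj)
  exists_iff_mem := e.surjective.exists.symm.trans hq.exists_iff_mem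

theorem card_eq_none_add_card [Fintype κ] (hp : EnumeratesOnce p S) :
    Fintype.card {c // p c = none} + S.card = Fintype.card κ := by
  classical
  have image_eq : (Finset.univ.filter fun c => p c ≠ none).image p = S.map .some := by
    ext (_ | b)
    · simp
    · simpa using (exists_congr fun c => and_iff_right_of_imp (by simp +contextual)).trans
        hp.exists_iff_mem
  have card_eq : (Finset.univ.filter fun c => p c ≠ none).card = S.card := by
    rw [← Finset.card_map .some (s := S), ← image_eq, Finset.card_image_of_injOn]
    intro c hc d _ hcd
    obtain ⟨b, hb⟩ := Option.ne_none_iff_exists'.1 (Finset.mem_filter.1 hc).2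
    exact hp.unique hb (hcd ▸ hb)
  rw [← card_eq, Fintype.card_subtype]
  exact Finset.card_filter_add_card_filter_not _

theorem exists_injective_comp_eq [Fintype ι] [Fintype κ]
    (hp : EnumeratesOnce p S) (hq : EnumeratesOnce q R) (hRS : R ⊆ S)
    (hcard : Fintype.card ι + S.card ≤ Fintype.card κ + R.card) :
    ∃ f : ι → κ, Function.Injective f ∧ p ∘ f = q := by
  classical
  refine exists_injective_comp_eq_of_card_fiber_le fun v => ?_
  rcases v with _ | b
  · have := hp.card_eq_none_add_card
    have := hq.card_eq_none_add_card
    omega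
  · by_cases hb : b ∈ R
    · obtain ⟨c, hc⟩ := hp.exists_iff_mem.2 (hRS hb)
      calc Fintype.card {i // q i = some b}
        _ ≤ 1 := Fintype.card_le_one_iff.2 fun i j => Subtype.ext (hq.unique i.2 j.2)
        _ ≤ _ := Fintype.card_pos_iff.2 ⟨⟨c, hc⟩⟩
    · have : IsEmpty {i // q i = some b} := ⟨fun i => hb (hq.mem i.2)⟩
      simp

theorem mem_range_iff (hp : EnumeratesOnce p S) (hpf : EnumeratesOnce (p ∘ f) R) {c : κ} {b : β}
    (hc : p c = some b) : (∃ i, f i = c) ↔ b ∈ R := by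
  refine ⟨fun ⟨i, hi⟩ => hpf.mem (hi ▸ hc), fun hb => ?_⟩
  obtain ⟨i, hi⟩ := hpf.exists_iff_mem.2 hb
  exact ⟨i, hp.unique hi hc⟩

theorem extend_eq_some_iff (hp : EnumeratesOnce p S) (hf : Function.Injective f)
    (hpf : EnumeratesOnce (p ∘ f) R) {c : κ} {b : β} :
    Function.extend f q p c = some b ↔
      (∃ i, f i = c ∧ q i = some b) ∨ (p c = some b ∧ b ∉ R) := by
  by_cases hc : ∃ i, f i = c
  · obtain ⟨i, rfl⟩ := hc
    have : ¬ (p (f i) = some b ∧ b ∉ R) := fun h => h.2 (hpf.mem h.1)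
    simp [hf.extend_apply, hf.eq_iff, this]
  · have : ∀ b, p c = some b → b ∉ R := fun b hb => (hp.mem_range_iff hpf hb).not.1 hc
    grind [Function.extend_apply']

theorem extend [DecidableEq β] (hp : EnumeratesOnce p S) (hf : Function.Injective f)
    (hpf : EnumeratesOnce (p ∘ f) R) (hq : EnumeratesOnce q Q) (hQ : Disjoint Q (S \ R)) :
    EnumeratesOnce (Function.extend f q p) (Q ∪ S \ R) where
  unique {c d b} hc hd := by
    have not_both : b ∈ Q → b ∈ S → b ∈ R := by
      grind [Finset.disjoint_left]
    rw [hp.extend_eq_some_iff hf hpf] at hc hd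
    rcases hc with ⟨i, rfl, hi⟩ | ⟨hc, hbR⟩ <;> rcases hd with ⟨j, rfl, hj⟩ | ⟨hd, hbR'⟩
    · rw [hq.unique hi hj]
    · exact absurd (not_both (hq.mem hi) (hp.mem hd)) hbR'
    · exact absurd (not_both (hq.mem hj) (hp.mem hc)) hbR
    · exact hp.unique hc hd
  exists_iff_mem {b} := by
    simp only [hp.extend_eq_some_iff hf hpf, exists_or, exists_and_right, hp.exists_iff_mem,
      Finset.mem_union, Finset.mem_sdiff, ← hq.exists_iff_mem]
    rw [exists_comm]
    simp only [exists_eq_left']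

end EnumeratesOnce

theorem sum_vote_extend {ι κ β : Type*} [Fintype ι] [Fintype κ] [DecidableEq β] (r : β → ℕ)
    {f : ι → κ} (hf : Function.Injective f) (q : ι → Option β) (p : κ → Option β) :
    ∑ c, vote r (p c) (Function.extend f q p c) = ∑ i, vote r (p (f i)) (q i) := by
  refine (Fintype.sum_of_injective f hf _ _ (fun c hc => ?_) fun i => ?_).symm
  · rw [Function.extend_apply' _ _ _ hc, vote_self]
  · rw [hf.extend_apply]

/-! ### The comparison `δ_u` -/

section DeltaSet

variable {β : Type*} [DecidableEq β] (r : β → ℕ) (S₀ S₁ : Finset β)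

theorem kOf_comm : kOf S₀ S₁ = kOf S₁ S₀ := by
  rw [kOf, kOf, max_comm, Finset.inter_comm]

theorem card_sdiff_le_kOf : (S₀ \ S₁).card ≤ kOf S₀ S₁ := by
  have := Finset.card_sdiff_add_card_inter S₀ S₁
  rw [kOf]
  omega

theorem getD_padded {k : ℕ} (i : Fin k) :
    (padded S₀ S₁ k).getD i none = paddedArray (S₀ \ S₁) k i := by
  rw [padded, paddedArray, List.getD_eq_getElem?_getD, List.getElem?_append, List.length_map]
  split_ifs with h
  · rw [List.getElem?_map, List.getElem?_eq_getElem h, Option.map_some, Option.getD_some]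
  · rw [List.getElem?_replicate, List.getElem?_eq_none (not_lt.1 h)]
    split_ifs <;> rfl

theorem deltaSet_eq_inf' :
    deltaSet r S₀ S₁ = Finset.univ.inf' Finset.univ_nonempty
      fun σ : Equiv.Perm (Fin (kOf S₀ S₁)) =>
        ∑ i, vote r (paddedArray (S₀ \ S₁) _ i) (paddedArray (S₁ \ S₀) _ (σ i)) := by
  simp only [deltaSet, getD_padded]

theorem exists_perm_deltaSet_eq :
    ∃ σ : Equiv.Perm (Fin (kOf S₀ S₁)), deltaSet r S₀ S₁ =
      ∑ i, vote r (paddedArray (S₀ \ S₁) _ i) (paddedArray (S₁ \ S₀) _ (σ i)) := by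
  rw [deltaSet_eq_inf']
  obtain ⟨σ, -, hσ⟩ := Finset.exists_mem_eq_inf' Finset.univ_nonempty
    fun σ : Equiv.Perm (Fin (kOf S₀ S₁)) =>
      ∑ i, vote r (paddedArray (S₀ \ S₁) _ i) (paddedArray (S₁ \ S₀) _ (σ i))
  exact ⟨σ, hσ⟩

theorem deltaSet_le {k : ℕ} (hk : k = kOf S₀ S₁) (σ : Equiv.Perm (Fin k)) :
    deltaSet r S₀ S₁ ≤
      ∑ i, vote r (paddedArray (S₀ \ S₁) _ i) (paddedArray (S₁ \ S₀) _ (σ i)) := by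
  subst hk
  rw [deltaSet_eq_inf']
  exact Finset.inf'_le _ (Finset.mem_univ σ)

variable {r S₀ S₁}

/-- Since `δ_u` is a minimum over permutations, exchanging its arguments gives minus a maximum. -/
theorem deltaSet_swap_le (hr : Set.InjOn r (S₀ ∪ S₁)) :
    deltaSet r S₁ S₀ ≤ -deltaSet r S₀ S₁ := by
  obtain ⟨σ, hσ⟩ := exists_perm_deltaSet_eq r S₀ S₁
  have mem_union : ∀ {P Q : Finset β} {b : β} {i : Fin (kOf S₀ S₁)},
      paddedArray (P \ Q) _ i = some b → b ∈ P :=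
    fun hb => (Finset.mem_sdiff.1 (Finset.mem_toList.1 (List.mem_of_getElem? hb))).1
  calc deltaSet r S₁ S₀
    _ ≤ ∑ i, vote r (paddedArray (S₁ \ S₀) _ i) (paddedArray (S₀ \ S₁) _ (σ.symm i)) :=
      deltaSet_le r S₁ S₀ (kOf_comm S₀ S₁) σ.symm
    _ = ∑ i, vote r (paddedArray (S₁ \ S₀) _ (σ i)) (paddedArray (S₀ \ S₁) _ i) := by
      rw [← Equiv.sum_comp σ]
      simp only [Equiv.symm_apply_apply]
    _ = ∑ i, -vote r (paddedArray (S₀ \ S₁) _ i) (paddedArray (S₁ \ S₀) _ (σ i)) :=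
      Finset.sum_congr rfl fun i _ => vote_antisymm fun b hb c hc =>
        hr (.inr (mem_union hb)) (.inl (mem_union hc))
    _ = -deltaSet r S₀ S₁ := by rw [hσ, Finset.sum_neg_distrib]

/-- If `p` lists the `N`-partners of the clones of `u`, an optimal permutation for
`δ_u(N(u), T(u))` assigns the vertices of `T(u)` to the clones, those of `N(u) ∩ T(u)` staying
where they are; the padding nulls find a place because `|N(u)|, |T(u)| ≤ cap(u)`. -/
theorem EnumeratesOnce.exists_deltaSet_eq_sum_vote {κ : Type*} [Fintype κ] {p : κ → Option β}
    (r : β → ℕ) (hp : EnumeratesOnce p S₀) (hcard : S₁.card ≤ Fintype.card κ) :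
    ∃ g : κ → Option β, EnumeratesOnce g S₁ ∧ (∀ c b, p c = some b → b ∈ S₁ → g c = some b) ∧
      deltaSet r S₀ S₁ = ∑ c, vote r (p c) (g c) := by
  obtain ⟨σ, hσ⟩ := exists_perm_deltaSet_eq r S₀ S₁
  have array₀ := enumeratesOnce_paddedArray (card_sdiff_le_kOf S₀ S₁)
  have array₁ := (enumeratesOnce_paddedArray
    ((card_sdiff_le_kOf S₁ S₀).trans_eq (kOf_comm S₁ S₀))).comp_equiv σ
  have enough_clones : Fintype.card (Fin (kOf S₀ S₁)) + S₀.card ≤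
      Fintype.card κ + (S₀ \ S₁).card := by
    have := hp.card_eq_none_add_card
    have := Finset.card_sdiff_add_card_inter S₀ S₁
    have := Finset.card_le_card (Finset.inter_subset_left (s₁ := S₀) (s₂ := S₁))
    rw [Fintype.card_fin, kOf]
    omega
  obtain ⟨f, hf, hpf⟩ := hp.exists_injective_comp_eq array₀ Finset.sdiff_subset enough_clones
  have hpf' : EnumeratesOnce (p ∘ f) (S₀ \ S₁) := hpf ▸ array₀
  have hS₁ : S₁ \ S₀ ∪ S₀ \ (S₀ \ S₁) = S₁ := by grind
  have hdisj : Disjoint (S₁ \ S₀) (S₀ \ (S₀ \ S₁)) :=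
    Finset.disjoint_of_subset_right Finset.sdiff_subset Finset.sdiff_disjoint
  refine ⟨Function.extend f _ p, hS₁ ▸ hp.extend hf hpf' array₁ hdisj, fun c b hc hb => ?_, ?_⟩
  · exact (hp.extend_eq_some_iff hf hpf').2 (.inr ⟨hc, fun h => (Finset.mem_sdiff.1 h).2 hb⟩)
  · rw [hσ, sum_vote_extend r hf]
    simp only [← hpf, Function.comp_apply]

end DeltaSet

theorem sum_comp_add_sum_ite_notMem_image {ι X A : Type*} [Fintype X] [DecidableEq X]
    [AddCommMonoid A] {M : Finset ι} {π : ι → X} (hπ : Set.InjOn π M) (f : X → A) :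
    ∑ e ∈ M, f (π e) + ∑ x, (if x ∉ M.image π then f x else 0) = ∑ x, f x := by
  rw [← Finset.sum_image hπ, ← Finset.sum_filter, ← Finset.compl_filter, Finset.filter_univ_mem,
    Finset.sum_add_sum_compl]

namespace PrefInstance

theorem mem_rowSet {α β : Type*} [Fintype β] [DecidableEq α] [DecidableEq β]
    {M : Finset (α × β)} {a : α} {b : β} : b ∈ rowSet M a ↔ (a, b) ∈ M := by
  simp [rowSet]

theorem mem_colSet {α β : Type*} [Fintype α] [DecidableEq α] [DecidableEq β]
    {M : Finset (α × β)} {a : α} {b : β} : a ∈ colSet M b ↔ (a, b) ∈ M := by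
  simp [colSet]

section

variable {α β : Type*} [Fintype α] [Fintype β] [DecidableEq α] [DecidableEq β]

variable {I : PrefInstance α β} {N T M : Finset (α × β)} {N' T' M' : Finset (I.CloneA × I.CloneB)}

theorem delta_swap_le (hM : M ⊆ I.E) (hT : T ⊆ I.E) : I.Delta T M ≤ -I.Delta M T := by
  have swapA (a : α) : I.DeltaA T M a ≤ -I.DeltaA M T a :=
    deltaSet_swap_le <| (I.rankA_injOn a).mono <| Set.union_subset
      (fun _ hb => hM (mem_rowSet.1 hb)) (fun _ hb => hT (mem_rowSet.1 hb))
  have swapB (b : β) : I.DeltaB T M b ≤ -I.DeltaB M T b :=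
    deltaSet_swap_le <| (I.rankB_injOn b).mono <| Set.union_subset
      (fun _ ha => hM (mem_colSet.1 ha)) (fun _ ha => hT (mem_colSet.1 ha))
  rw [Delta, Delta, neg_add, ← Finset.sum_neg_distrib, ← Finset.sum_neg_distrib]
  exact add_le_add (Finset.sum_le_sum fun a _ => swapA a) (Finset.sum_le_sum fun b _ => swapB b)

theorem Popular.weaklyPopular (hM : I.Popular M) : I.WeaklyPopular M :=
  ⟨hM.1, fun T hT => (delta_swap_le hM.1.1 hT.1).trans (neg_nonpos.2 (hM.2 T hT))⟩

/-! ### Partners of clones -/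

/-- The vertex of `B` of which the `M'`-partner of the clone `x` is a clone, or null. -/
noncomputable def mateA (M' : Finset (I.CloneA × I.CloneB)) (x : I.CloneA) : Option β :=
  (I.partnerA M' x).map Sigma.fst

/-- The vertex of `A` of which the `M'`-partner of the clone `y` is a clone, or null. -/
noncomputable def mateB (M' : Finset (I.CloneA × I.CloneB)) (y : I.CloneB) : Option α :=
  (I.partnerB M' y).map Sigma.fst

theorem wtE_eq (x : I.CloneA) (y : I.CloneB) :
    I.wtE N' x y = vote (I.rankA x.1) (some y.1) (mateA N' x) +
      vote (I.rankB y.1) (some x.1) (mateB N' y) :=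
  rfl

theorem mateA_eq_none_iff {x : I.CloneA} : mateA M' x = none ↔ ∀ y, (x, y) ∉ M' := by
  simp only [mateA, partnerA, Option.map_eq_none_iff, dite_eq_right_iff, reduceCtorEq, imp_false,
    not_exists]

theorem mateB_eq_none_iff {y : I.CloneB} : mateB M' y = none ↔ ∀ x, (x, y) ∉ M' := by
  simp only [mateB, partnerB, Option.map_eq_none_iff, dite_eq_right_iff, reduceCtorEq, imp_false,
    not_exists]

theorem vote_none_mateA (r : β → ℕ) (x : I.CloneA) :
    vote r none (mateA N' x) = if ∃ y, (x, y) ∈ N' then -1 else 0 := by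
  rw [vote_none_left, ← ite_not]
  simp only [mateA_eq_none_iff, not_forall, not_not]

theorem vote_none_mateB (r : α → ℕ) (y : I.CloneB) :
    vote r none (mateB N' y) = if ∃ x, (x, y) ∈ N' then -1 else 0 := by
  rw [vote_none_left, ← ite_not]
  simp only [mateB_eq_none_iff, not_forall, not_not]

namespace IsCloneMatching

theorem mateA_eq_some_iff (h : I.IsCloneMatching M') {x : I.CloneA} {b : β} :
    mateA M' x = some b ↔ ∃ y : I.CloneB, (x, y) ∈ M' ∧ y.1 = b := by
  have partner_eq {y : I.CloneB} : I.partnerA M' x = some y ↔ (x, y) ∈ M' := by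
    unfold partnerA
    split_ifs with hx
    · rw [Option.some_inj]
      exact ⟨fun hy => hy ▸ hx.choose_spec,
        fun hy => congrArg Prod.snd (h.1 _ hx.choose_spec _ hy rfl)⟩
    · simpa using not_exists.1 hx y
  simp only [mateA, Option.map_eq_some_iff, partner_eq]

theorem mateB_eq_some_iff (h : I.IsCloneMatching M') {y : I.CloneB} {a : α} :
    mateB M' y = some a ↔ ∃ x : I.CloneA, (x, y) ∈ M' ∧ x.1 = a := by
  have partner_eq {x : I.CloneA} : I.partnerB M' y = some x ↔ (x, y) ∈ M' := by
    unfold partnerB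
    split_ifs with hy
    · rw [Option.some_inj]
      exact ⟨fun hx => hx ▸ hy.choose_spec,
        fun hx => congrArg Prod.fst (h.2 _ hy.choose_spec _ hx rfl)⟩
    · simpa using not_exists.1 hy x
  simp only [mateB, Option.map_eq_some_iff, partner_eq]

theorem sum_add_sum_unmatched (h : I.IsCloneMatching M') (f : I.CloneA → ℤ) (g : I.CloneB → ℤ) :
    ∑ e ∈ M', (f e.1 + g e.2) + (∑ x, if ∀ y, (x, y) ∉ M' then f x else 0) +
      (∑ y, if ∀ x, (x, y) ∉ M' then g y else 0) = ∑ x, f x + ∑ y, g y := by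
  have sumA := sum_comp_add_sum_ite_notMem_image (fun e he e' he' => h.1 e he e' he') f
  have sumB := sum_comp_add_sum_ite_notMem_image (fun e he e' he' => h.2 e he e' he') g
  simp only [Finset.mem_image, Prod.exists, exists_and_right, exists_eq_right, not_exists]
    at sumA sumB
  rw [Finset.sum_add_distrib, ← sumA, ← sumB]
  ring

theorem card_le_card_add_card_unmatched (hT' : I.IsCloneMatching T') :
    T'.card ≤ N'.card + (T'.filter fun e => ∀ y, (e.1, y) ∉ N').card := by
  have matched_le : (T'.filter fun e => ¬ ∀ y, (e.1, y) ∉ N').card ≤ N'.card := by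
    calc (T'.filter fun e => ¬ ∀ y, (e.1, y) ∉ N').card
      _ ≤ (N'.image Prod.fst).card := by
        refine Finset.card_le_card_of_injOn Prod.fst (fun e he => ?_) fun e he e' he' =>
          hT'.1 e (Finset.mem_filter.1 he).1 e' (Finset.mem_filter.1 he').1
        simpa using (Finset.mem_filter.1 he).2
      _ ≤ N'.card := Finset.card_image_le
  rw [← Finset.card_filter_add_card_filter_not (s := T') fun e => ∀ y, (e.1, y) ∉ N']
  omega

theorem wtTotal_eq_sum_vote (hT' : I.IsCloneMatching T') :
    I.wtTotal N' T' = ∑ x, vote (I.rankA x.1) (mateA T' x) (mateA N' x) +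
      ∑ y, vote (I.rankB y.1) (mateB T' y) (mateB N' y) := by
  rw [← hT'.sum_add_sum_unmatched, wtTotal]
  refine congrArg₂ _ (congrArg₂ _ ?_ ?_) ?_
  · refine Finset.sum_congr rfl fun e he => ?_
    rw [wtE_eq, hT'.mateA_eq_some_iff.2 ⟨e.2, he, rfl⟩, hT'.mateB_eq_some_iff.2 ⟨e.1, he, rfl⟩]
  · refine Finset.sum_congr rfl fun x _ => if_ctx_congr Iff.rfl (fun hx => ?_) fun _ => rfl
    rw [mateA_eq_none_iff.2 hx, vote_none_mateA]
  · refine Finset.sum_congr rfl fun y _ => if_ctx_congr Iff.rfl (fun hy => ?_) fun _ => rfl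
    rw [mateB_eq_none_iff.2 hy, vote_none_mateB]

/-- Weak duality, with slack `s e` on the edge `e`. -/
theorem wtTotal_add_sum_le (hT' : I.IsCloneMatching T') {f : I.CloneA → ℤ} {g : I.CloneB → ℤ}
    {s : I.CloneA × I.CloneB → ℤ} (edge : ∀ e ∈ T', I.wtE N' e.1 e.2 + s e ≤ f e.1 + g e.2)
    (lastA : ∀ x, (if ∃ y, (x, y) ∈ N' then -1 else 0) ≤ f x)
    (lastB : ∀ y, (if ∃ x, (x, y) ∈ N' then -1 else 0) ≤ g y) :
    I.wtTotal N' T' + ∑ e ∈ T', s e ≤ ∑ x, f x + ∑ y, g y := by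
  calc I.wtTotal N' T' + ∑ e ∈ T', s e
    _ = ∑ e ∈ T', (I.wtE N' e.1 e.2 + s e) +
        (∑ x, if ∀ y, (x, y) ∉ T' then (if ∃ y, (x, y) ∈ N' then -1 else 0) else 0) +
        (∑ y, if ∀ x, (x, y) ∉ T' then (if ∃ x, (x, y) ∈ N' then -1 else 0) else 0) := by
      rw [wtTotal, Finset.sum_add_distrib]
      ring
    _ ≤ ∑ e ∈ T', (f e.1 + g e.2) + (∑ x, if ∀ y, (x, y) ∉ T' then f x else 0) +
        (∑ y, if ∀ x, (x, y) ∉ T' then g y else 0) := by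
      refine add_le_add (add_le_add (Finset.sum_le_sum edge) ?_) ?_
      · exact Finset.sum_le_sum fun x _ => by grind [lastA x]
      · exact Finset.sum_le_sum fun y _ => by grind [lastB y]
    _ = ∑ x, f x + ∑ y, g y := hT'.sum_add_sum_unmatched f g

end IsCloneMatching

/-! ### Realizations -/

namespace IsRealization

theorem isCloneMatching (h : I.IsRealization M M') : I.IsCloneMatching M' :=
  ⟨h.1, h.2.1⟩

theorem card_eq (h : I.IsRealization M M') : M'.card = M.card :=
  h.2.2.2

theorem mem_iff (h : I.IsRealization M M') {a : α} {b : β} :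
    (a, b) ∈ M ↔ ∃ x y, (x, y) ∈ M' ∧ x.1 = a ∧ y.1 = b := by
  rw [← h.2.2.1]
  simp only [Finset.mem_image, Prod.exists, Prod.mk.injEq]

theorem injOn_proj (h : I.IsRealization M M') :
    Set.InjOn (fun e : I.CloneA × I.CloneB => (e.1.1, e.2.1)) M' :=
  Finset.card_image_iff.1 ((congrArg Finset.card h.2.2.1).trans h.card_eq.symm)

theorem enumeratesOnce_mateA (h : I.IsRealization M M') (a : α) :
    EnumeratesOnce (fun i => mateA M' ⟨a, i⟩) (rowSet M a) where
  unique hi hj := by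
    obtain ⟨y, hy, hyb⟩ := h.isCloneMatching.mateA_eq_some_iff.1 hi
    obtain ⟨z, hz, hzb⟩ := h.isCloneMatching.mateA_eq_some_iff.1 hj
    simpa using congrArg Prod.fst (h.injOn_proj hy hz (Prod.ext rfl (hyb.trans hzb.symm)))
  exists_iff_mem := by
    simp only [mem_rowSet, h.mem_iff, h.isCloneMatching.mateA_eq_some_iff]
    exact ⟨fun ⟨_, y, hy, hb⟩ => ⟨_, y, hy, rfl, hb⟩,
      fun ⟨⟨_, i⟩, y, hy, ha, hb⟩ => by subst ha; exact ⟨i, y, hy, hb⟩⟩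

theorem enumeratesOnce_mateB (h : I.IsRealization M M') (b : β) :
    EnumeratesOnce (fun j => mateB M' ⟨b, j⟩) (colSet M b) where
  unique hi hj := by
    obtain ⟨x, hx, hxa⟩ := h.isCloneMatching.mateB_eq_some_iff.1 hi
    obtain ⟨z, hz, hza⟩ := h.isCloneMatching.mateB_eq_some_iff.1 hj
    simpa using congrArg Prod.snd (h.injOn_proj hx hz (Prod.ext (hxa.trans hza.symm) rfl))
  exists_iff_mem := by
    simp only [mem_colSet, h.mem_iff, h.isCloneMatching.mateB_eq_some_iff]
    exact ⟨fun ⟨_, x, hx, ha⟩ => ⟨x, _, hx, ha, rfl⟩,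
      fun ⟨x, ⟨_, j⟩, hx, ha, hb⟩ => by subst hb; exact ⟨j, x, hx, ha⟩⟩

theorem mem_of_mem_mateA (h : I.IsRealization M M') {x : I.CloneA} {b : β}
    (hb : b ∈ mateA M' x) : (x.1, b) ∈ M :=
  mem_rowSet.1 ((h.enumeratesOnce_mateA x.1).mem (c := x.2) hb)

theorem mem_of_mem_mateB (h : I.IsRealization M M') {y : I.CloneB} {a : α}
    (ha : a ∈ mateB M' y) : (a, y.1) ∈ M :=
  mem_colSet.1 ((h.enumeratesOnce_mateB y.1).mem (c := y.2) ha)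

theorem gnEdge_of_mem (hN' : I.IsRealization N N') (hT' : I.IsRealization T T') (hT : T ⊆ I.E)
    (keepA : ∀ x, ∀ b ∈ mateA N' x, (x.1, b) ∈ T → b ∈ mateA T' x)
    (keepB : ∀ y, ∀ a ∈ mateB N' y, (a, y.1) ∈ T → a ∈ mateB T' y)
    {x : I.CloneA} {y : I.CloneB} (hxy : (x, y) ∈ T') : I.GNEdge N N' x y := by
  have mem_T : (x.1, y.1) ∈ T := hT'.mem_iff.2 ⟨x, y, hxy, rfl, rfl⟩
  by_cases mem_N : (x.1, y.1) ∈ N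
  · obtain ⟨x', y', hxy', hx, hy⟩ := hN'.mem_iff.1 mem_N
    rw [← hx, ← hy] at mem_T
    obtain ⟨z, hz, hzy⟩ := hT'.isCloneMatching.mateA_eq_some_iff.1 <| keepA x' y'.1
      (hN'.isCloneMatching.mateA_eq_some_iff.2 ⟨y', hxy', rfl⟩) mem_T
    obtain ⟨w, hw, hwx⟩ := hT'.isCloneMatching.mateB_eq_some_iff.1 <| keepB y' x'.1
      (hN'.isCloneMatching.mateB_eq_some_iff.2 ⟨x', hxy', rfl⟩) mem_T
    have x_eq : x = x' :=
      congrArg Prod.fst (hT'.injOn_proj hxy hz (Prod.ext hx.symm (hy.symm.trans hzy.symm)))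
    have y_eq : y = y' :=
      congrArg Prod.snd (hT'.injOn_proj hxy hw (Prod.ext (hx.symm.trans hwx.symm) hy.symm))
    exact .inr (x_eq ▸ y_eq ▸ hxy')
  · exact .inl ⟨hT mem_T, mem_N⟩

end IsRealization

/-- The pairs of clones `x` of `a` and `y` of `b` such that `x` asks for `b` and `y` asks for `a`,
where the requests of the clones are listed by `p` and `q`. If every neighbor of a vertex in a
matching is requested by exactly one of its clones, these pairs realize the matching. -/
def mutualRequests (p : I.CloneA → Option β) (q : I.CloneB → Option α) :
    Finset (I.CloneA × I.CloneB) :=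
  Finset.univ.filter fun e => p e.1 = some e.2.1 ∧ q e.2 = some e.1.1

section MutualRequests

variable {p : I.CloneA → Option β} {q : I.CloneB → Option α}

theorem mem_mutualRequests {x : I.CloneA} {y : I.CloneB} :
    (x, y) ∈ mutualRequests p q ↔ p x = some y.1 ∧ q y = some x.1 := by
  simp [mutualRequests]

variable (hp : ∀ a, EnumeratesOnce (fun i => p ⟨a, i⟩) (rowSet T a))
  (hq : ∀ b, EnumeratesOnce (fun j => q ⟨b, j⟩) (colSet T b))

include hp hq

theorem injOn_mutualRequests :
    Set.InjOn (fun e : I.CloneA × I.CloneB => (e.1.1, e.2.1)) (mutualRequests p q) := by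
  rintro ⟨⟨a, i⟩, ⟨b, j⟩⟩ he ⟨⟨a', i'⟩, ⟨b', j'⟩⟩ he' h
  obtain ⟨rfl, rfl⟩ : a = a' ∧ b = b' := by simpa using h
  obtain ⟨hi, hj⟩ := mem_mutualRequests.1 he
  obtain ⟨hi', hj'⟩ := mem_mutualRequests.1 he'
  rw [(hp a).unique hi hi', (hq b).unique hj hj']

theorem isCloneMatching_mutualRequests : I.IsCloneMatching (mutualRequests p q) := by
  have injOn := injOn_mutualRequests hp hq
  constructor
  · rintro ⟨x, y⟩ he ⟨x', y'⟩ he' (rfl : x = x')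
    have hyy' := (mem_mutualRequests.1 he).1.symm.trans (mem_mutualRequests.1 he').1
    exact injOn he he' (Prod.ext rfl (Option.some_inj.1 hyy'))
  · rintro ⟨x, y⟩ he ⟨x', y'⟩ he' (rfl : y = y')
    have hxx' := (mem_mutualRequests.1 he).2.symm.trans (mem_mutualRequests.1 he').2
    exact injOn he he' (Prod.ext (Option.some_inj.1 hxx') rfl)

theorem mateA_mutualRequests : mateA (mutualRequests p q) = p := by
  ext x b
  rw [(isCloneMatching_mutualRequests hp hq).mateA_eq_some_iff]
  constructor
  · rintro ⟨y, hxy, rfl⟩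
    exact (mem_mutualRequests.1 hxy).1
  · intro hb
    have mem_T := mem_rowSet.1 ((hp x.1).mem (c := x.2) hb)
    obtain ⟨j, hj⟩ := (hq b).exists_iff_mem.2 (mem_colSet.2 mem_T)
    exact ⟨⟨b, j⟩, mem_mutualRequests.2 ⟨hb, hj⟩, rfl⟩

theorem mateB_mutualRequests : mateB (mutualRequests p q) = q := by
  ext y a
  rw [(isCloneMatching_mutualRequests hp hq).mateB_eq_some_iff]
  constructor
  · rintro ⟨x, hxy, rfl⟩
    exact (mem_mutualRequests.1 hxy).2
  · intro ha
    have mem_T := mem_colSet.1 ((hq y.1).mem (c := y.2) ha)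
    obtain ⟨i, hi⟩ := (hp a).exists_iff_mem.2 (mem_rowSet.2 mem_T)
    exact ⟨⟨a, i⟩, mem_mutualRequests.2 ⟨hi, ha⟩, rfl⟩

theorem isRealization_mutualRequests : I.IsRealization T (mutualRequests p q) := by
  have image_eq : (mutualRequests p q).image (fun e => (e.1.1, e.2.1)) = T := by
    ext ⟨a, b⟩
    simp only [Finset.mem_image, Prod.exists, Prod.mk.injEq]
    constructor
    · rintro ⟨x, y, hxy, rfl, rfl⟩
      exact mem_rowSet.1 ((hp x.1).mem (c := x.2) (mem_mutualRequests.1 hxy).1)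
    · intro hab
      obtain ⟨i, hi⟩ := (hp a).exists_iff_mem.2 (mem_rowSet.2 hab)
      obtain ⟨j, hj⟩ := (hq b).exists_iff_mem.2 (mem_colSet.2 hab)
      exact ⟨⟨a, i⟩, ⟨b, j⟩, mem_mutualRequests.2 ⟨hi, hj⟩, rfl, rfl⟩
  obtain ⟨uniqueA, uniqueB⟩ := isCloneMatching_mutualRequests hp hq
  refine ⟨uniqueA, uniqueB, image_eq, ?_⟩
  rw [← Finset.card_image_of_injOn (injOn_mutualRequests hp hq), image_eq]

end MutualRequests

theorem exists_isRealization_wtTotal_eq_neg_delta (hN : N ⊆ I.E) (hN' : I.IsRealization N N')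
    (hT : I.IsMatching T) :
    ∃ T', I.IsRealization T T' ∧ (∀ e ∈ T', I.GNEdge N N' e.1 e.2) ∧
      I.wtTotal N' T' = -I.Delta N T := by
  choose p hp keepA deltaA using fun a => (hN'.enumeratesOnce_mateA a).exists_deltaSet_eq_sum_vote
    (I.rankA a) (S₁ := rowSet T a) (by simpa using hT.2.1 a)
  choose q hq keepB deltaB using fun b => (hN'.enumeratesOnce_mateB b).exists_deltaSet_eq_sum_vote
    (I.rankB b) (S₁ := colSet T b) (by simpa using hT.2.2 b)
  let T' : Finset (I.CloneA × I.CloneB) :=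
    mutualRequests (fun x => p x.1 x.2) fun y => q y.1 y.2
  have hT' : I.IsRealization T T' := isRealization_mutualRequests hp hq
  have mateA_eq : mateA T' = fun x => p x.1 x.2 := mateA_mutualRequests hp hq
  have mateB_eq : mateB T' = fun y => q y.1 y.2 := mateB_mutualRequests hp hq
  refine ⟨T', hT', fun e he => hN'.gnEdge_of_mem hT' hT.1 ?_ ?_ he, ?_⟩
  · exact fun x b hb hxb => mateA_eq ▸ keepA x.1 x.2 b hb (mem_rowSet.2 hxb)
  · exact fun y a ha hay => mateB_eq ▸ keepB y.1 y.2 a ha (mem_colSet.2 hay)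
  have antisymmA (x : I.CloneA) : vote (I.rankA x.1) (mateA T' x) (mateA N' x) =
      -vote (I.rankA x.1) (mateA N' x) (mateA T' x) := vote_antisymm fun b hb c hc =>
    I.rankA_injOn x.1 (hT.1 (hT'.mem_of_mem_mateA hb)) (hN (hN'.mem_of_mem_mateA hc))
  have antisymmB (y : I.CloneB) : vote (I.rankB y.1) (mateB T' y) (mateB N' y) =
      -vote (I.rankB y.1) (mateB N' y) (mateB T' y) := vote_antisymm fun a ha c hc =>
    I.rankB_injOn y.1 (hT.1 (hT'.mem_of_mem_mateB ha)) (hN (hN'.mem_of_mem_mateB hc))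
  rw [hT'.isCloneMatching.wtTotal_eq_sum_vote, Fintype.sum_congr _ _ antisymmA,
    Fintype.sum_congr _ _ antisymmB, Finset.sum_neg_distrib, Finset.sum_neg_distrib, ← neg_add]
  simp only [Delta, DeltaA, DeltaB, deltaA, deltaB, mateA_eq, mateB_eq, Fintype.sum_sigma]

/-! ### The dual solution of a 2-level witness -/

/-- The value of a clone of `A'` in the dual solution that certifies `N'` to have maximum weight:
`0` if the clone is unmatched in `N'`, otherwise `1` on level 0 and `-1` on level 1. -/
def dualA (N' : Finset (I.CloneA × I.CloneB)) (lA : I.CloneA → Bool) (x : I.CloneA) : ℤ :=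
  if ∀ y, (x, y) ∉ N' then 0 else if lA x then -1 else 1

/-- The value of a clone of `B'` in the dual solution that certifies `N'` to have maximum weight:
`0` if the clone is unmatched in `N'`, otherwise `-1` on level 0 and `1` on level 1. -/
def dualB (N' : Finset (I.CloneA × I.CloneB)) (lB : I.CloneB → Bool) (y : I.CloneB) : ℤ :=
  if ∀ x, (x, y) ∉ N' then 0 else if lB y then 1 else -1

namespace TwoLevelWitness

variable {lA : I.CloneA → Bool} {lB : I.CloneB → Bool}

theorem sum_dual_eq_zero (hW : I.TwoLevelWitness N N' lA lB) (hN' : I.IsCloneMatching N') :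
    ∑ x, dualA N' lA x + ∑ y, dualB N' lB y = 0 := by
  obtain ⟨-, -, same_level, -, -⟩ := hW
  have cancel : ∀ e ∈ N', dualA N' lA e.1 + dualB N' lB e.2 = 0 := by
    intro e he
    have matchedA : ¬ ∀ y, (e.1, y) ∉ N' := fun h => h e.2 he
    have matchedB : ¬ ∀ x, (x, e.2) ∉ N' := fun h => h e.1 he
    rw [dualA, dualB, if_neg matchedA, if_neg matchedB, same_level e he]
    split_ifs <;> rfl
  rw [← hN'.sum_add_sum_unmatched, Finset.sum_eq_zero cancel]
  simp +contextual [dualA, dualB]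

/-- A clone unmatched in `N'` votes for each of its edges, so such an edge does not have weight
`-2`. If it is incident to `x ∈ A'`, its other endpoint is therefore in `B'₁` and has dual value
`1`, whereas its weight is at most `0`: this is where the slack comes from. -/
theorem wtE_add_ite_le_dual (hW : I.TwoLevelWitness N N' lA lB) {x : I.CloneA} {y : I.CloneB}
    (hxy : I.GNEdge N N' x y) :
    I.wtE N' x y + (if ∀ y', (x, y') ∉ N' then 1 else 0) ≤ dualA N' lA x + dualB N' lB y := by
  obtain ⟨levelA, levelB, -, wt_eq, wt_le⟩ := hW
  have unmatchedA (h : ∀ y', (x, y') ∉ N') :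
      vote (I.rankA x.1) (some y.1) (mateA N' x) = 1 := by rw [mateA_eq_none_iff.2 h]; rfl
  have unmatchedB (h : ∀ x', (x', y) ∉ N') :
      vote (I.rankB y.1) (some x.1) (mateB N' y) = 1 := by rw [mateB_eq_none_iff.2 h]; rfl
  have voteA := abs_le.1 (abs_vote_le_one (I.rankA x.1) (some y.1) (mateA N' x))
  have voteB := abs_le.1 (abs_vote_le_one (I.rankB y.1) (some x.1) (mateB N' y))
  have wt := wtE_eq (N' := N') x y
  grind [dualA, dualB]

theorem wtTotal_add_card_unmatched_le (hW : I.TwoLevelWitness N N' lA lB)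
    (hN' : I.IsCloneMatching N') (hT' : I.IsCloneMatching T')
    (hT'N : ∀ e ∈ T', I.GNEdge N N' e.1 e.2) :
    I.wtTotal N' T' + (T'.filter fun e => ∀ y, (e.1, y) ∉ N').card ≤ 0 := by
  rw [← hW.sum_dual_eq_zero hN', Finset.card_filter]
  push_cast
  refine hT'.wtTotal_add_sum_le (fun e he => hW.wtE_add_ite_le_dual (hT'N e he)) ?_ ?_
  · intro x
    simp only [dualA, ← not_exists, ite_not]
    split_ifs <;> simp
  · intro y
    simp only [dualB, ← not_exists, ite_not]
    split_ifs <;> simp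

theorem max_le_delta (hW : I.TwoLevelWitness N N' lA lB) (hN : N ⊆ I.E)
    (hN' : I.IsRealization N N') (hT : I.IsMatching T) :
    max 0 ((T.card : ℤ) - N.card) ≤ I.Delta N T := by
  obtain ⟨T', hT', hT'N, wt_eq⟩ := exists_isRealization_wtTotal_eq_neg_delta hN hN' hT
  have wt_le := hW.wtTotal_add_card_unmatched_le hN'.isCloneMatching hT'.isCloneMatching hT'N
  have card_le := hT'.isCloneMatching.card_le_card_add_card_unmatched (N' := N')
  rw [hT'.card_eq, hN'.card_eq] at card_le
  omega

theorem popular (hW : I.TwoLevelWitness N N' lA lB) (hN : I.IsMatching N)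
    (hN' : I.IsRealization N N') : I.Popular N :=
  ⟨hN, fun _ hT => (le_max_left _ _).trans (hW.max_le_delta hN.1 hN' hT)⟩

end TwoLevelWitness

end

end PrefInstance

/-- Let `N` be a matching in `G` (with realization `N'`) that admits a
2-level witness. Then `Δ(N,T) > 0` for every matching `T` with `|T| > |N|`, i.e. `N` is
more popular than every larger matching; in particular no matching larger than `N` is
weakly popular, so `N` is a maximum-size weakly popular matching in `G`. -/
theorem statement9 {α β : Type*} [Fintype α] [Fintype β] [DecidableEq α] [DecidableEq β]
    (I : PrefInstance α β) (N : Finset (α × β)) (hN : I.IsMatching N)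
    (N' : Finset (I.CloneA × I.CloneB)) (hN' : I.IsRealization N N')
    (lA : I.CloneA → Bool) (lB : I.CloneB → Bool)
    (hW : I.TwoLevelWitness N N' lA lB) :
    (∀ T : Finset (α × β), I.IsMatching T → N.card < T.card → 0 < I.Delta N T) ∧
    I.WeaklyPopular N ∧
    (∀ T : Finset (α × β), I.WeaklyPopular T → T.card ≤ N.card) := by
  have larger_loses : ∀ T, I.IsMatching T → N.card < T.card → 0 < I.Delta N T := fun T hT hcard =>
    (sub_pos.2 (Nat.cast_lt.2 hcard)).trans_le
      ((le_max_right _ _).trans (hW.max_le_delta hN.1 hN' hT))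
  exact ⟨larger_loses, (hW.popular hN hN').weaklyPopular, fun T hT =>
    not_lt.1 fun hcard => (larger_loses T hT.1 hcard).not_ge (hT.2 N hN)⟩
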